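/- Fix an integer k ≥ 2 and a real t ∈ [0,1). Let 0 < φ_1 < φ_2 ≤ π, and suppose (e^{iφ_1}, t) lies below the φ_e curve. Then there exists N ≥ 0 such that for all n ≥ N, B̃_{φ_2,t,k}^n(φ_2) − B̃_{φ_1,t,k}^n(φ_1) ≥ 2π·k^{n−N}; in particular lim inf_{n→∞} k^{−n}·(B̃_{φ_2,t,k}^n(φ_2) − B̃_{φ_1,t,k}^n(φ_1)) > 0. -/

import Mathlib

/-- The Blaschke product `B_{z,t,k}(w) = z·((w + t)/(1 + w·t))^k`. -/
noncomputable def Blaschke (z : ℂ) (t : ℝ) (k : ℕ) (w : ℂ) : ℂ :=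
  z * ((w + (t : ℂ)) / (1 + w * (t : ℂ))) ^ k

/-- The root with nonnegative imaginary part of the quadratic
`t·w² + ((k+1)·t² − (k−1))·w + t = 0` (for `t_c ≤ t < 1` the discriminant
`(k+1)²t⁴ − 2(k²+1)t² + (k−1)²` is `≤ 0`, so the root is
`(−b + i·√(−disc))/(2t)` with `b = (k+1)t² − (k−1)`). -/
noncomputable def wbullet (k : ℕ) (t : ℝ) : ℂ :=
  (-((((k : ℂ)) + 1) * (t : ℂ)^2 - ((k : ℂ) - 1)) +
    Complex.I * ((Real.sqrt (-(((k : ℝ) + 1)^2 * t^4 - 2 * ((k : ℝ)^2 + 1) * t^2 +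
      ((k : ℝ) - 1)^2)) : ℝ) : ℂ)) / (2 * (t : ℂ))

/-- The edge angle `φ_e(t) = Arg(w_•(t)·((1 + w_•(t)·t)/(w_•(t) + t))^k)`. -/
noncomputable def phie (k : ℕ) (t : ℝ) : ℝ :=
  (wbullet k t * ((1 + wbullet k t * (t : ℂ)) / (wbullet k t + (t : ℂ))) ^ k).arg

/-- `(z,t)` lies below the `φ_e` curve: either `0 ≤ t < t_c`, or
`t_c ≤ t < 1` and `φ_e(t) < |Arg z| ≤ π`. -/
def belowCurve (k : ℕ) (t : ℝ) (z : ℂ) : Prop :=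
  (0 ≤ t ∧ t < ((k : ℝ) - 1) / ((k : ℝ) + 1)) ∨
  (((k : ℝ) - 1) / ((k : ℝ) + 1) ≤ t ∧ t < 1 ∧ phie k t < |z.arg| ∧ |z.arg| ≤ Real.pi)

/-- The lift of the Blaschke product `B_{e^{iφ},t,k}` to `ℝ`:
`B̃_{φ,t,k}(θ) = k·θ − 2k·arctan(t·sin θ/(1 + t·cos θ)) + φ`. -/
noncomputable def Blift (φ t : ℝ) (k : ℕ) (θ : ℝ) : ℝ :=
  (k : ℝ) * θ - 2 * (k : ℝ) * Real.arctan (t * Real.sin θ / (1 + t * Real.cos θ)) + φ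

/-!
If `z` lies below the edge curve, `B = B_{z,t,k}` has a fixed point `a` inside the unit disc: the
contractions `r B` have interior fixed points `a_r`, and if these only accumulated on the circle as
`r → 1`, the limit would be a fixed point `e^{iα}` with `B'(e^{iα}) ≤ 1`, which forces
`|Arg z| ≤ φ_e(t)`. The harmonic measure of the disc seen from `a` is then uniformly expanded by
`B`, so the two lifted orbits drift apart until their gap exceeds a full turn `2π`; from that time
on, since `B` has degree `k`, the gap is multiplied by at least `k` at each step.
-/

/-! ### Expanding maps of the line -/

section ExpandingMaps

open Filter intervalIntegral

variable {F G F' ρ : ℝ → ℝ} {l x y : ℝ}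

theorem iterate_le_iterate_of_monotone {α : Type*} [Preorder α] {f g : α → α} {x y : α}
    (hf : Monotone f) (hfg : f ≤ g) (hxy : x ≤ y) (n : ℕ) : f^[n] x ≤ g^[n] y :=
  (hf.iterate n hxy).trans (hf.iterate_le_of_le hfg n y)

theorem mul_integral_le_integral_image (hF : ∀ x, HasDerivAt F (F' x) x) (hF' : Continuous F')
    (hρ : Continuous ρ) (hexp : ∀ x, l * ρ x ≤ ρ (F x) * F' x) (hxy : x ≤ y) :
    l * ∫ s in x..y, ρ s ≤ ∫ s in F x..F y, ρ s := by
  have hFc : Continuous F := continuous_iff_continuousAt.2 fun x => (hF x).continuousAt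
  rw [← integral_const_mul, ← integral_comp_mul_deriv (fun s _ => hF s) hF'.continuousOn hρ]
  exact integral_mono_on hxy ((hρ.const_mul l).intervalIntegrable _ _)
    (((hρ.comp hFc).mul hF').intervalIntegrable _ _) fun s _ => hexp s

theorem pow_mul_integral_le_integral_iterate (hF : ∀ x, HasDerivAt F (F' x) x)
    (hF' : Continuous F') (hmono : Monotone F) (hFG : F ≤ G) (hρ : Continuous ρ) (hρ0 : 0 ≤ ρ)
    (hl : 0 ≤ l) (hexp : ∀ x, l * ρ x ≤ ρ (F x) * F' x) (hxy : x ≤ y) (n : ℕ) :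
    l ^ n * ∫ s in x..y, ρ s ≤ ∫ s in F^[n] x..G^[n] y, ρ s := by
  induction n with
  | zero => simp
  | succ n ih =>
    have hle := iterate_le_iterate_of_monotone hmono hFG hxy n
    rw [Function.iterate_succ_apply', Function.iterate_succ_apply']
    calc l ^ (n + 1) * ∫ s in x..y, ρ s
        = l * (l ^ n * ∫ s in x..y, ρ s) := by ring
      _ ≤ l * ∫ s in F^[n] x..G^[n] y, ρ s := by gcongr
      _ ≤ ∫ s in F (F^[n] x)..F (G^[n] y), ρ s :=
          mul_integral_le_integral_image hF hF' hρ hexp hle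
      _ ≤ ∫ s in F (F^[n] x)..G (G^[n] y), ρ s :=
          integral_mono_interval le_rfl (hmono hle) (hFG _)
            (Eventually.of_forall hρ0) (hρ.intervalIntegrable _ _)

theorem tendsto_iterate_sub_iterate_atTop {C : ℝ} (hF : ∀ x, HasDerivAt F (F' x) x)
    (hF' : Continuous F') (hFG : F ≤ G) (hρ : Continuous ρ) (hρ0 : ∀ x, 0 < ρ x)
    (hρC : ∀ x, ρ x ≤ C) (hl : 1 < l) (hexp : ∀ x, l * ρ x ≤ ρ (F x) * F' x) (hxy : x < y) :
    Tendsto (fun n => G^[n] y - F^[n] x) atTop atTop := by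
  have hl0 : 0 < l := one_pos.trans hl
  have hC : 0 < C := (hρ0 0).trans_le (hρC 0)
  have hmono : Monotone F := (strictMono_of_hasDerivAt_pos hF fun x =>
    pos_of_mul_pos_right ((mul_pos hl0 (hρ0 x)).trans_le (hexp x)) (hρ0 _).le).monotone
  have hpos : 0 < ∫ s in x..y, ρ s :=
    intervalIntegral_pos_of_pos (hρ.intervalIntegrable _ _) hρ0 hxy
  have hlower (n : ℕ) : l ^ n * (∫ s in x..y, ρ s) / C ≤ G^[n] y - F^[n] x := by
    rw [div_le_iff₀' hC]
    calc l ^ n * ∫ s in x..y, ρ s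
        ≤ ∫ s in F^[n] x..G^[n] y, ρ s :=
          pow_mul_integral_le_integral_iterate hF hF' hmono hFG hρ (fun s => (hρ0 s).le) hl0.le
            hexp hxy.le n
      _ ≤ ∫ _ in F^[n] x..G^[n] y, C :=
          integral_mono_on (iterate_le_iterate_of_monotone hmono hFG hxy.le n)
            (hρ.intervalIntegrable _ _) (continuous_const.intervalIntegrable _ _)
            fun s _ => hρC s
      _ = C * (G^[n] y - F^[n] x) := by simp [mul_comm]
  exact tendsto_atTop_mono hlower
    (((tendsto_pow_atTop_atTop_of_one_lt hl).atTop_mul_const hpos).atTop_div_const hC)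

end ExpandingMaps

section DegreeMaps

open Filter

variable {F G : ℝ → ℝ} {x y : ℝ}

theorem mul_pow_le_iterate_sub_iterate {T : ℝ} {k : ℕ} (hF : Monotone F) (hFG : F ≤ G)
    (hper : ∀ x, F (x + T) = F x + k * T) (h : T ≤ y - x) (n : ℕ) :
    T * k ^ n ≤ G^[n] y - F^[n] x := by
  induction n with
  | zero => simpa using h
  | succ n ih =>
    have hshift := AddConstMapClass.map_add_nsmul (AddConstMap.mk F hper) (F^[n] x) (k ^ n)
    have hle : F^[n] x + k ^ n • T ≤ G^[n] y := by
      rw [nsmul_eq_mul, Nat.cast_pow]; linarith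
    rw [Function.iterate_succ_apply', Function.iterate_succ_apply', le_sub_iff_add_le']
    calc F (F^[n] x) + T * k ^ (n + 1)
        = F (F^[n] x + k ^ n • T) := by
          refine Eq.trans ?_ hshift.symm
          simp only [AddConstMap.coe_mk, nsmul_eq_mul, Nat.cast_pow]
          ring
      _ ≤ F (G^[n] y) := hF hle
      _ ≤ G (G^[n] y) := hFG _

theorem norm_iterate_add_le {E : Type*} [SeminormedAddCommGroup E] {f : E → E} {k M : ℝ}
    (hk : 2 ≤ k) (hf : ∀ x, ‖f x‖ ≤ k * ‖x‖ + M) (x : E) (n : ℕ) :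
    ‖f^[n] x‖ + M ≤ k ^ n * (‖x‖ + M) := by
  have hM : 0 ≤ M := by simpa using (norm_nonneg _).trans (hf 0)
  induction n with
  | zero => simp
  | succ n ih =>
    rw [Function.iterate_succ_apply']
    calc ‖f (f^[n] x)‖ + M ≤ k * ‖f^[n] x‖ + 2 * M := by linarith [hf (f^[n] x)]
      _ ≤ k * (‖f^[n] x‖ + M) := by rw [mul_add]; gcongr
      _ ≤ k * (k ^ n * (‖x‖ + M)) := by gcongr
      _ = k ^ (n + 1) * (‖x‖ + M) := by ring

theorem iterate_sub_iterate_le {k M₁ M₂ : ℝ} (hk : 2 ≤ k) (hF : ∀ x, |F x| ≤ k * |x| + M₁)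
    (hG : ∀ x, |G x| ≤ k * |x| + M₂) (x y : ℝ) (n : ℕ) :
    G^[n] y - F^[n] x ≤ (|x| + M₁ + (|y| + M₂)) * k ^ n := by
  have hM₁ : 0 ≤ M₁ := by simpa using (abs_nonneg _).trans (hF 0)
  have hM₂ : 0 ≤ M₂ := by simpa using (abs_nonneg _).trans (hG 0)
  simp only [← Real.norm_eq_abs] at hF hG ⊢
  linarith [norm_iterate_add_le hk hF x n, norm_iterate_add_le hk hG y n,
    Real.le_norm_self (G^[n] y), neg_abs_le (F^[n] x), Real.norm_eq_abs (F^[n] x)]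

theorem liminf_inv_pow_mul_pos {u : ℕ → ℝ} {k c C : ℝ} {N : ℕ} (hk : 0 < k) (hc : 0 < c)
    (hlower : ∀ n, N ≤ n → c * k ^ (n - N) ≤ u n) (hupper : ∀ n, u n ≤ C * k ^ n) :
    0 < liminf (fun n => (k ^ n)⁻¹ * u n) atTop := by
  have hcobdd : IsCoboundedUnder (· ≥ ·) atTop fun n => (k ^ n)⁻¹ * u n := by
    refine IsBoundedUnder.isCoboundedUnder_ge (isBoundedUnder_of ⟨C, fun n => ?_⟩)
    rw [inv_mul_le_iff₀ (by positivity), mul_comm]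
    exact hupper n
  refine (show 0 < c / k ^ N by positivity).trans_le (le_liminf_of_le hcobdd ?_)
  filter_upwards [eventually_ge_atTop N] with n hn
  rw [le_inv_mul_iff₀ (by positivity)]
  calc k ^ n * (c / k ^ N) = c * k ^ (n - N) := by
        rw [pow_sub₀ k hk.ne' hn]; ring
    _ ≤ u n := hlower n hn

end DegreeMaps

/-! ### The Poisson kernel as an expanding density -/

section PoissonKernel

open Complex Metric

/-- The hyperbolic automorphism `w ↦ (w + t)/(1 + wt)` of the unit disc, whose `k`-th power is the
nontrivial factor of `Blaschke z t k`. -/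
noncomputable def moebius (t : ℝ) (w : ℂ) : ℂ :=
  (w + t) / (1 + w * t)

variable {t : ℝ} {a p w z : ℂ} {k : ℕ}

theorem Blaschke_eq_mul_moebius_pow (z : ℂ) (t : ℝ) (k : ℕ) (w : ℂ) :
    Blaschke z t k w = z * moebius t w ^ k :=
  rfl

theorem one_sub_sq_pos (ht : |t| < 1) : 0 < 1 - t ^ 2 :=
  sub_pos.2 ((sq_lt_one_iff_abs_lt_one t).2 ht)

theorem one_add_mul_ofReal_ne_zero (ht : |t| < 1) (hw : ‖w‖ ≤ 1) : 1 + w * (t : ℂ) ≠ 0 := by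
  intro h
  have hnorm : ‖w‖ * |t| = 1 := by
    rw [← Real.norm_eq_abs, ← norm_real, ← norm_mul, eq_neg_of_add_eq_zero_right h, norm_neg,
      norm_one]
  nlinarith [abs_nonneg t]

theorem norm_one_add_mul_sq_sub_norm_add_sq (t : ℝ) (w : ℂ) :
    ‖1 + w * (t : ℂ)‖ ^ 2 - ‖w + (t : ℂ)‖ ^ 2 = (1 - t ^ 2) * (1 - ‖w‖ ^ 2) := by
  simp only [Complex.sq_norm, normSq_apply, add_re, add_im, mul_re, mul_im, one_re, one_im,
    ofReal_re, ofReal_im]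
  ring

theorem one_sub_norm_moebius_sq (ht : |t| < 1) (hw : ‖w‖ ≤ 1) :
    1 - ‖moebius t w‖ ^ 2 = (1 - t ^ 2) * (1 - ‖w‖ ^ 2) / ‖1 + w * (t : ℂ)‖ ^ 2 := by
  have hne : ‖1 + w * (t : ℂ)‖ ≠ 0 := norm_ne_zero_iff.2 (one_add_mul_ofReal_ne_zero ht hw)
  rw [← norm_one_add_mul_sq_sub_norm_add_sq, moebius, norm_div, div_pow, sub_div,
    div_self (pow_ne_zero 2 hne)]

theorem norm_moebius_of_norm_eq_one (ht : |t| < 1) (hw : ‖w‖ = 1) : ‖moebius t w‖ = 1 := by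
  have h := one_sub_norm_moebius_sq ht hw.le
  rw [hw, one_pow, sub_self, mul_zero, zero_div, sub_eq_zero] at h
  exact (pow_eq_one_iff_of_nonneg (norm_nonneg _) two_ne_zero).1 h.symm

theorem norm_moebius_lt_one (ht : |t| < 1) (hw : ‖w‖ < 1) : ‖moebius t w‖ < 1 := by
  have hne : 0 < ‖1 + w * (t : ℂ)‖ := norm_pos_iff.2 (one_add_mul_ofReal_ne_zero ht hw.le)
  have ht2 := one_sub_sq_pos ht
  have hw2 : 0 < 1 - ‖w‖ ^ 2 := sub_pos.2 (pow_lt_one₀ (norm_nonneg w) hw two_ne_zero)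
  have h : 0 < 1 - ‖moebius t w‖ ^ 2 := by rw [one_sub_norm_moebius_sq ht hw.le]; positivity
  exact (sq_lt_one_iff₀ (norm_nonneg _)).1 (sub_pos.1 h)

theorem moebius_sub_moebius (ht : |t| < 1) (ha : ‖a‖ ≤ 1) (hw : ‖w‖ ≤ 1) :
    moebius t w - moebius t a =
      (1 - t ^ 2 : ℝ) * (w - a) / ((1 + w * (t : ℂ)) * (1 + a * (t : ℂ))) := by
  rw [moebius, moebius, div_sub_div _ _ (one_add_mul_ofReal_ne_zero ht hw)
    (one_add_mul_ofReal_ne_zero ht ha)]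
  congr 1
  push_cast
  ring

theorem norm_Blaschke_of_norm_eq_one (ht : |t| < 1) (hw : ‖w‖ = 1) (z : ℂ) (k : ℕ) :
    ‖Blaschke z t k w‖ = ‖z‖ := by
  rw [Blaschke_eq_mul_moebius_pow, norm_mul, norm_pow, norm_moebius_of_norm_eq_one ht hw, one_pow,
    mul_one]

theorem poissonKernel_zero_of_norm_eq_one (hw : ‖w‖ = 1) (a : ℂ) :
    poissonKernel 0 a w = (1 - ‖a‖ ^ 2) / ‖w - a‖ ^ 2 := by
  simp only [poissonKernel_def, sub_zero, hw, one_pow]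

theorem poissonKernel_zero_mem_Icc (ha : ‖a‖ < 1) (hw : ‖w‖ = 1) :
    poissonKernel 0 a w ∈ Set.Icc ((1 - ‖a‖) / (1 + ‖a‖)) ((1 + ‖a‖) / (1 - ‖a‖)) := by
  have hw' : w ∈ sphere (0 : ℂ) 1 := mem_sphere_zero_iff_norm.2 hw
  have ha' : a ∈ ball (0 : ℂ) 1 := mem_ball_zero_iff.2 ha
  rw [poissonKernel_eq_re_herglotzRieszKernel, Function.comp_apply, herglotzRieszKernel_def]
  constructor
  · simpa only [sub_zero] using le_re_herglotzRieszKernel hw' ha'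
  · simpa only [sub_zero] using re_herglotzRieszKernel_le hw' ha'

theorem poissonKernel_zero_pos (ha : ‖a‖ < 1) (hw : ‖w‖ = 1) : 0 < poissonKernel 0 a w :=
  (div_pos (sub_pos.2 ha) (by positivity)).trans_le (poissonKernel_zero_mem_Icc ha hw).1

theorem continuous_poissonKernel_exp (ha : ‖a‖ < 1) :
    Continuous fun x : ℝ => poissonKernel 0 a (exp (x * I)) := by
  have hne (x : ℝ) : ‖exp (x * I) - a‖ ^ 2 ≠ 0 := by
    refine pow_ne_zero 2 (norm_ne_zero_iff.2 (sub_ne_zero.2 ?_))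
    rintro rfl
    exact ha.ne (norm_exp_ofReal_mul_I x)
  simp only [poissonKernel_zero_of_norm_eq_one (norm_exp_ofReal_mul_I _)]
  exact continuous_const.div (by fun_prop) hne

theorem poissonKernel_zero_mul_left (hz : ‖z‖ = 1) (hw : ‖w‖ = 1) (a : ℂ) :
    poissonKernel 0 (z * a) (z * w) = poissonKernel 0 a w := by
  have hzw : ‖z * w‖ = 1 := by rw [norm_mul, hz, hw, one_mul]
  rw [poissonKernel_zero_of_norm_eq_one hzw, poissonKernel_zero_of_norm_eq_one hw, ← mul_sub,
    norm_mul, norm_mul, hz, one_mul, one_mul]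

theorem poissonKernel_zero_moebius (ht : |t| < 1) (ha : ‖a‖ < 1) (hw : ‖w‖ = 1) :
    poissonKernel 0 (moebius t a) (moebius t w) * ((1 - t ^ 2) / ‖1 + w * (t : ℂ)‖ ^ 2) =
      poissonKernel 0 a w := by
  have ht2 := one_sub_sq_pos ht
  have ha0 : ‖1 + a * (t : ℂ)‖ ≠ 0 := norm_ne_zero_iff.2 (one_add_mul_ofReal_ne_zero ht ha.le)
  have hw0 : ‖1 + w * (t : ℂ)‖ ≠ 0 := norm_ne_zero_iff.2 (one_add_mul_ofReal_ne_zero ht hw.le)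
  rw [poissonKernel_zero_of_norm_eq_one (norm_moebius_of_norm_eq_one ht hw),
    poissonKernel_zero_of_norm_eq_one hw, one_sub_norm_moebius_sq ht ha.le,
    moebius_sub_moebius ht ha.le hw.le, norm_div, norm_mul, norm_mul, norm_real,
    Real.norm_of_nonneg ht2.le]
  generalize ‖1 + a * (t : ℂ)‖ = A at ha0
  generalize ‖1 + w * (t : ℂ)‖ = W at hw0
  field_simp

theorem sq_sum_lt_card_mul_sum_sq {ι R : Type*} [Field R] [LinearOrder R] [IsStrictOrderedRing R]
    {s : Finset ι} {f : ι → R} {i j : ι} (hi : i ∈ s) (hj : j ∈ s) (hij : f i ≠ f j) :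
    (∑ m ∈ s, f m) ^ 2 < s.card * ∑ m ∈ s, f m ^ 2 := by
  have hcard : (0 : R) < s.card := by exact_mod_cast Finset.card_pos.2 ⟨i, hi⟩
  have hvariance : 0 < ∑ m ∈ s, (s.card * f m - ∑ n ∈ s, f n) ^ 2 := by
    refine Finset.sum_pos_iff_of_nonneg (fun m _ => sq_nonneg _) |>.2 ?_
    by_contra! h
    have heq {m : ι} (hm : m ∈ s) : s.card * f m = ∑ n ∈ s, f n :=
      sub_eq_zero.1 (pow_eq_zero_iff two_ne_zero |>.1 ((h m hm).antisymm (sq_nonneg _)))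
    exact hij (mul_left_cancel₀ hcard.ne' ((heq hi).trans (heq hj).symm))
  have hexpand : ∑ m ∈ s, (s.card * f m - ∑ n ∈ s, f n) ^ 2 =
      s.card * (s.card * ∑ m ∈ s, f m ^ 2 - (∑ m ∈ s, f m) ^ 2) := by
    simp only [sub_sq, mul_pow, Finset.sum_add_distrib, Finset.sum_sub_distrib, Finset.sum_const,
      nsmul_eq_mul, ← Finset.mul_sum, ← Finset.sum_mul]
    ring
  rw [hexpand] at hvariance
  exact sub_pos.1 (pos_of_mul_pos_right hvariance hcard.le)

theorem norm_pow_sub_pow_le {R : Type*} [SeminormedCommRing R] [NormOneClass R] {w : R}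
    (hw : ‖w‖ ≤ 1) (p : R) (k : ℕ) :
    ‖w ^ k - p ^ k‖ ≤ (∑ i ∈ Finset.range k, ‖p‖ ^ i) * ‖w - p‖ := by
  rw [norm_sub_rev, norm_sub_rev w, ← (Commute.all p w).geom_sum₂_mul]
  refine (norm_mul_le _ _).trans ?_
  gcongr
  refine norm_sum_le_of_le _ fun i _ => (norm_mul_le _ _).trans ?_
  calc ‖p ^ i‖ * ‖w ^ (k - 1 - i)‖ ≤ ‖p‖ ^ i * ‖w‖ ^ (k - 1 - i) := by
        gcongr <;> exact norm_pow_le _ _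
    _ ≤ ‖p‖ ^ i := mul_le_of_le_one_right (by positivity) (pow_le_one₀ (norm_nonneg w) hw)

/-- A lower bound, for the density given by Poisson kernels, of the expansion of `w ↦ w ^ k` on the
unit circle: the kernel at the source is based at a point of modulus `r`, the kernel at the target
at the `k`-th power of that point. -/
noncomputable def powExpansion (k : ℕ) (r : ℝ) : ℝ :=
  k * (∑ i ∈ Finset.range k, (r ^ 2) ^ i) / (∑ i ∈ Finset.range k, r ^ i) ^ 2

theorem one_lt_powExpansion (hk : 2 ≤ k) {r : ℝ} (hr0 : 0 ≤ r) (hr1 : r < 1) :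
    1 < powExpansion k r := by
  have hpos : 0 < ∑ i ∈ Finset.range k, r ^ i :=
    Finset.sum_pos' (fun i _ => pow_nonneg hr0 i) ⟨0, Finset.mem_range.2 (by omega), by simp⟩
  have hlt := sq_sum_lt_card_mul_sum_sq (f := fun i => r ^ i)
    (Finset.mem_range.2 (by omega : 0 < k)) (Finset.mem_range.2 (by omega : 1 < k))
    (by simpa using hr1.ne')
  rw [powExpansion, one_lt_div (by positivity)]
  simpa only [Finset.card_range, ← pow_mul, mul_comm] using hlt

theorem powExpansion_mul_poissonKernel_le (hk : k ≠ 0) (hp : ‖p‖ < 1) (hw : ‖w‖ = 1) :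
    powExpansion k ‖p‖ * poissonKernel 0 p w ≤ k * poissonKernel 0 (p ^ k) (w ^ k) := by
  have hpk : ‖p ^ k‖ < 1 := by rw [norm_pow]; exact pow_lt_one₀ (norm_nonneg p) hp hk
  have hwk : ‖w ^ k‖ = 1 := by rw [norm_pow, hw, one_pow]
  have hsub : 0 < ‖w ^ k - p ^ k‖ := norm_sub_pos_iff.2 fun h => hpk.ne (h ▸ hwk)
  have hgeom : 1 - ‖p ^ k‖ ^ 2 = (∑ i ∈ Finset.range k, (‖p‖ ^ 2) ^ i) * (1 - ‖p‖ ^ 2) := by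
    rw [geom_sum_mul_neg, norm_pow, pow_right_comm]
  rw [poissonKernel_zero_of_norm_eq_one hw, poissonKernel_zero_of_norm_eq_one hwk]
  calc powExpansion k ‖p‖ * ((1 - ‖p‖ ^ 2) / ‖w - p‖ ^ 2)
      = k * ((1 - ‖p ^ k‖ ^ 2) / ((∑ i ∈ Finset.range k, ‖p‖ ^ i) * ‖w - p‖) ^ 2) := by
        rw [powExpansion, hgeom, mul_pow, div_mul_div_comm, mul_assoc, mul_div_assoc]
    _ ≤ k * ((1 - ‖p ^ k‖ ^ 2) / ‖w ^ k - p ^ k‖ ^ 2) := by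
        have : 0 ≤ 1 - ‖p ^ k‖ ^ 2 := sub_nonneg.2 (pow_le_one₀ (norm_nonneg _) hpk.le)
        gcongr
        exact norm_pow_sub_pow_le hw.le p k

theorem powExpansion_mul_poissonKernel_le_Blaschke (ht : |t| < 1) (hk : k ≠ 0) (hz : ‖z‖ = 1)
    (ha : ‖a‖ < 1) (hfix : Blaschke z t k a = a) (hw : ‖w‖ = 1) :
    powExpansion k ‖moebius t a‖ * poissonKernel 0 a w ≤
      poissonKernel 0 a (Blaschke z t k w) * (k * (1 - t ^ 2) / ‖1 + w * (t : ℂ)‖ ^ 2) := by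
  have hMw := norm_moebius_of_norm_eq_one ht hw
  have hMwk : ‖moebius t w ^ k‖ = 1 := by rw [norm_pow, hMw, one_pow]
  have ht2 := one_sub_sq_pos ht
  have hrot : poissonKernel 0 a (Blaschke z t k w) =
      poissonKernel 0 (moebius t a ^ k) (moebius t w ^ k) := by
    conv_lhs => rw [← hfix]
    exact poissonKernel_zero_mul_left hz hMwk _
  calc powExpansion k ‖moebius t a‖ * poissonKernel 0 a w
      = powExpansion k ‖moebius t a‖ * poissonKernel 0 (moebius t a) (moebius t w) *
          ((1 - t ^ 2) / ‖1 + w * (t : ℂ)‖ ^ 2) := by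
        rw [mul_assoc, poissonKernel_zero_moebius ht ha hw]
    _ ≤ k * poissonKernel 0 (moebius t a ^ k) (moebius t w ^ k) *
          ((1 - t ^ 2) / ‖1 + w * (t : ℂ)‖ ^ 2) := by
        gcongr ?_ * _
        exact powExpansion_mul_poissonKernel_le hk (norm_moebius_lt_one ht ha) hMw
    _ = _ := by rw [hrot]; ring

end PoissonKernel

/-! ### Fixed points of Blaschke products -/

section FixedPoints

open Complex Metric Filter
open scoped Topology

variable {t : ℝ} {a z : ℂ} {k : ℕ}

-- Without a fixed point, `exp (-(w + f w) / (w - f w))` is holomorphic, has modulus at most `1` on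
-- the circle, where the exponent is minus the Poisson kernel, and takes the value `e` at `0`.
theorem exists_fixedPoint_of_norm_le_on_sphere {f : ℂ → ℂ} {R : ℝ} (hR : 0 < R)
    (hf : DiffContOnCl ℂ f (ball 0 R)) (hmaps : ∀ w ∈ sphere 0 R, ‖f w‖ ≤ R) :
    ∃ a ∈ closedBall (0 : ℂ) R, f a = a := by
  by_contra! hfix
  have hne : ∀ w ∈ closure (ball (0 : ℂ) R), w - f w ≠ 0 := fun w hw =>
    sub_ne_zero.2 (hfix w (closure_ball_subset_closedBall hw)).symm
  have hid : DiffContOnCl ℂ (fun w : ℂ => w) (ball 0 R) := differentiable_fun_id.diffContOnCl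
  have hdiff : DiffContOnCl ℂ (fun w => exp (-((w + f w) * (w - f w)⁻¹))) (ball 0 R) :=
    differentiable_exp.comp_diffContOnCl
      (((hid.add hf).smul ((hid.sub hf).inv hne)).neg)
  have hbound : ∀ w ∈ frontier (ball (0 : ℂ) R), ‖exp (-((w + f w) * (w - f w)⁻¹))‖ ≤ 1 := by
    intro w hw
    rw [frontier_ball _ hR.ne'] at hw
    have hpoisson : 0 ≤ poissonKernel 0 (f w) w := by
      rw [poissonKernel_def, sub_zero, sub_zero, mem_sphere_zero_iff_norm.1 hw]
      have := pow_le_pow_left₀ (norm_nonneg _) (hmaps w hw) 2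
      exact div_nonneg (sub_nonneg.2 this) (sq_nonneg _)
    rw [poissonKernel_eq_re_herglotzRieszKernel, Function.comp_apply, herglotzRieszKernel_def,
      sub_zero, sub_zero] at hpoisson
    rw [norm_exp, ← div_eq_mul_inv, neg_re]
    exact Real.exp_le_one_iff.2 (neg_nonpos.2 hpoisson)
  have hzero := norm_le_of_forall_mem_frontier_norm_le isBounded_ball hdiff hbound
    (subset_closure (mem_ball_self hR))
  have hf0 : f 0 ≠ 0 := hfix 0 (mem_closedBall_self hR.le)
  rw [zero_add, zero_sub, inv_neg, mul_neg, mul_inv_cancel₀ hf0, neg_neg, norm_exp, one_re] at hzero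
  exact (Real.one_lt_exp_iff.2 one_pos).not_ge hzero

theorem exists_fixedPoint_Blaschke_of_norm_lt_one (ht : |t| < 1) (hz : ‖z‖ < 1) (k : ℕ) :
    ∃ a, ‖a‖ < 1 ∧ Blaschke z t k a = a := by
  have hdiff : DiffContOnCl ℂ (Blaschke z t k) (ball 0 1) := by
    refine DifferentiableOn.diffContOnCl fun w hw => ?_
    have hne := one_add_mul_ofReal_ne_zero ht
      (mem_closedBall_zero_iff.1 (closure_ball_subset_closedBall hw))
    unfold Blaschke
    fun_prop (disch := exact hne)
  have hnorm {w : ℂ} (hw : w ∈ sphere (0 : ℂ) 1) : ‖Blaschke z t k w‖ < 1 := by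
    rwa [norm_Blaschke_of_norm_eq_one ht (mem_sphere_zero_iff_norm.1 hw)]
  obtain ⟨a, ha, hfix⟩ := exists_fixedPoint_of_norm_le_on_sphere one_pos hdiff
    fun w hw => (hnorm hw).le
  refine ⟨a, (mem_closedBall_zero_iff.1 ha).lt_of_ne fun ha1 => ?_, hfix⟩
  exact (hfix ▸ hnorm (mem_sphere_zero_iff_norm.2 ha1)).ne ha1

theorem geom_sum_moebius_mul_le (ht : |t| < 1) (hz : ‖z‖ ≤ 1) (ha : ‖a‖ < 1)
    (hfix : Blaschke z t k a = a) :
    (∑ i ∈ Finset.range k, (‖moebius t a‖ ^ 2) ^ i) * (1 - t ^ 2) ≤ ‖1 + a * (t : ℂ)‖ ^ 2 := by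
  have hnorm : ‖a‖ ≤ ‖moebius t a‖ ^ k := by
    rw [← norm_pow]
    conv_lhs => rw [← hfix, Blaschke_eq_mul_moebius_pow, norm_mul]
    exact mul_le_of_le_one_left (norm_nonneg _) hz
  have hd : 0 < ‖1 + a * (t : ℂ)‖ := norm_pos_iff.2 (one_add_mul_ofReal_ne_zero ht ha.le)
  have ha2 : 0 < 1 - ‖a‖ ^ 2 := sub_pos.2 (pow_lt_one₀ (norm_nonneg a) ha two_ne_zero)
  have hschwarz : (∑ i ∈ Finset.range k, (‖moebius t a‖ ^ 2) ^ i) *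
      ((1 - t ^ 2) * (1 - ‖a‖ ^ 2) / ‖1 + a * (t : ℂ)‖ ^ 2) ≤ 1 - ‖a‖ ^ 2 := by
    rw [← one_sub_norm_moebius_sq ht ha.le, geom_sum_mul_neg, pow_right_comm]
    gcongr
  rw [← mul_div_assoc, div_le_iff₀ (by positivity), ← mul_assoc, mul_comm (1 - ‖a‖ ^ 2)] at hschwarz
  exact le_of_mul_le_mul_right hschwarz ha2

-- On the unit circle `|B'(w)| = k (1 - t²) / |1 + wt|²`, so a boundary fixed point obtained here
-- has multiplier at most `1`.
theorem exists_fixedPoint_Blaschke (ht : |t| < 1) (hz : ‖z‖ ≤ 1) (k : ℕ) :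
    ∃ a, Blaschke z t k a = a ∧
      (‖a‖ < 1 ∨ ‖a‖ = 1 ∧ k * (1 - t ^ 2) ≤ ‖1 + a * (t : ℂ)‖ ^ 2) := by
  obtain ⟨r, -, hr, hrlim⟩ := exists_seq_strictMono_tendsto' (zero_lt_one (α := ℝ))
  have hrz (n : ℕ) : ‖(r n : ℂ) * z‖ < 1 := by
    rw [norm_mul, norm_real, Real.norm_of_nonneg (hr n).1.le]
    exact mul_lt_one_of_nonneg_of_lt_one_left (hr n).1.le (hr n).2 hz
  choose b hb hbfix using fun n => exists_fixedPoint_Blaschke_of_norm_lt_one ht (hrz n) k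
  obtain ⟨a, ha, φ, hφ, hlim⟩ := (isCompact_closedBall (0 : ℂ) 1).tendsto_subseq
    fun n => mem_closedBall_zero_iff.2 (hb n).le
  rw [mem_closedBall_zero_iff] at ha
  have hne := one_add_mul_ofReal_ne_zero ht ha
  have hM : Tendsto (fun n => moebius t (b (φ n))) atTop (𝓝 (moebius t a)) :=
    (hlim.add_const _).div ((hlim.mul_const _).const_add _) hne
  have hrz_lim : Tendsto (fun n => (r (φ n) : ℂ) * z) atTop (𝓝 z) := by
    simpa using ((continuous_ofReal.tendsto 1).comp (hrlim.comp hφ.tendsto_atTop)).mul_const z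
  have hB : Tendsto (fun n => Blaschke (r (φ n) * z) t k (b (φ n))) atTop (𝓝 (Blaschke z t k a)) :=
    hrz_lim.mul (hM.pow k)
  have hBfix : Blaschke z t k a = a :=
    tendsto_nhds_unique (hB.congr fun n => hbfix (φ n)) hlim
  refine ⟨a, hBfix, ha.lt_or_eq.imp_right fun ha1 => ⟨ha1, ?_⟩⟩
  have hle : (∑ i ∈ Finset.range k, (‖moebius t a‖ ^ 2) ^ i) * (1 - t ^ 2) ≤
      ‖1 + a * (t : ℂ)‖ ^ 2 :=
    le_of_tendsto_of_tendsto'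
      ((tendsto_finsetSum _ fun i _ => (hM.norm.pow 2).pow i).mul_const _)
      (((hlim.mul_const _).const_add _).norm.pow 2)
      fun n => geom_sum_moebius_mul_le ht (hrz _).le (hb _) (hbfix _)
  simpa [norm_moebius_of_norm_eq_one ht ha1] using hle

end FixedPoints

/-! ### The lift and the edge angle -/

section Lift

open Complex
open scoped ComplexConjugate

variable {t : ℝ} {a : ℂ}

theorem norm_one_add_mul_sq_of_norm_eq_one (t : ℝ) (ha : ‖a‖ = 1) :
    ‖1 + a * (t : ℂ)‖ ^ 2 = 1 + 2 * t * a.re + t ^ 2 := by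
  have h : a.re * a.re + a.im * a.im = 1 := by rw [← normSq_apply, ← Complex.sq_norm, ha, one_pow]
  simp only [Complex.sq_norm, normSq_apply, add_re, add_im, mul_re, mul_im, one_re, one_im,
    ofReal_re, ofReal_im]
  linear_combination t ^ 2 * h

theorem one_add_mul_cos_pos (ht : |t| < 1) (θ : ℝ) : 0 < 1 + t * Real.cos θ := by
  have h : |t * Real.cos θ| ≤ |t| := by
    rw [abs_mul]
    exact mul_le_of_le_one_right (abs_nonneg t) (Real.abs_cos_le_one θ)
  linarith [neg_abs_le (t * Real.cos θ)]

theorem hasDerivAt_Blift (ht : |t| < 1) (φ : ℝ) (k : ℕ) (θ : ℝ) :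
    HasDerivAt (Blift φ t k) (k * (1 - t ^ 2) / ‖1 + exp (θ * I) * (t : ℂ)‖ ^ 2) θ := by
  have hden := one_add_mul_cos_pos ht θ
  have hnorm : ‖1 + exp (θ * I) * (t : ℂ)‖ ^ 2 =
      (1 + t * Real.cos θ) ^ 2 + (t * Real.sin θ) ^ 2 := by
    rw [norm_one_add_mul_sq_of_norm_eq_one t (norm_exp_ofReal_mul_I θ), exp_ofReal_mul_I_re]
    linear_combination -t ^ 2 * Real.sin_sq_add_cos_sq θ
  have hquot := ((Real.hasDerivAt_sin θ).const_mul t).div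
    (((Real.hasDerivAt_cos θ).const_mul t).const_add 1) hden.ne'
  refine ((((hasDerivAt_id θ).const_mul (k : ℝ)).sub
    (hquot.arctan.const_mul (2 * (k : ℝ)))).add_const φ).congr_deriv ?_
  rw [hnorm]
  simp only [Pi.div_apply]
  field_simp
  linear_combination (-k : ℝ) * t ^ 2 * Real.sin_sq_add_cos_sq θ

theorem continuous_deriv_Blift (ht : |t| < 1) (k : ℕ) :
    Continuous fun θ : ℝ => k * (1 - t ^ 2) / ‖1 + exp (θ * I) * (t : ℂ)‖ ^ 2 :=
  continuous_const.div (by fun_prop) fun θ => pow_ne_zero 2 <| norm_ne_zero_iff.2 <|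
    one_add_mul_ofReal_ne_zero ht (norm_exp_ofReal_mul_I θ).le

theorem monotone_Blift (ht : |t| < 1) (φ : ℝ) (k : ℕ) : Monotone (Blift φ t k) := by
  have ht2 := one_sub_sq_pos ht
  exact monotone_of_hasDerivAt_nonneg (hasDerivAt_Blift ht φ k) fun θ => by positivity

theorem Blift_le_Blift_of_le {φ₁ φ₂ : ℝ} (h : φ₁ ≤ φ₂) (t : ℝ) (k : ℕ) :
    Blift φ₁ t k ≤ Blift φ₂ t k :=
  fun _ => add_le_add_right h _

theorem Blift_add_two_pi (φ t : ℝ) (k : ℕ) (θ : ℝ) :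
    Blift φ t k (θ + 2 * Real.pi) = Blift φ t k θ + k * (2 * Real.pi) := by
  rw [Blift, Blift, Real.sin_add_two_pi, Real.cos_add_two_pi]
  ring

theorem Blift_zero_neg (t : ℝ) (k : ℕ) (θ : ℝ) : Blift 0 t k (-θ) = -Blift 0 t k θ := by
  rw [Blift, Blift, Real.sin_neg, Real.cos_neg, mul_neg t, neg_div, Real.arctan_neg]
  ring

theorem abs_Blift_le (φ t : ℝ) (k : ℕ) (θ : ℝ) :
    |Blift φ t k θ| ≤ k * |θ| + (k * Real.pi + |φ|) := by
  rw [Blift]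
  generalize t * Real.sin θ / (1 + t * Real.cos θ) = s
  have harctan : |Real.arctan s| ≤ Real.pi / 2 :=
    abs_le.2 ⟨(Real.neg_pi_div_two_lt_arctan s).le, (Real.arctan_lt_pi_div_two s).le⟩
  calc |k * θ - 2 * k * Real.arctan s + φ|
      ≤ |k * θ| + |2 * k * Real.arctan s| + |φ| :=
        (abs_add_le _ _).trans (by gcongr; exact abs_sub _ _)
    _ = k * |θ| + 2 * k * |Real.arctan s| + |φ| := by
        simp only [abs_mul, Nat.abs_cast, Nat.abs_ofNat]
    _ ≤ k * |θ| + 2 * k * (Real.pi / 2) + |φ| := by gcongr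
    _ = k * |θ| + (k * Real.pi + |φ|) := by ring

theorem conj_eq_exp_arg_mul (u : ℂ) : conj u = exp (-(2 * u.arg) * I) * u := by
  conv => enter [1]; rw [← norm_mul_exp_arg_mul_I u]
  conv => enter [2, 2]; rw [← norm_mul_exp_arg_mul_I u]
  rw [map_mul, conj_ofReal, ← exp_conj, map_mul, conj_ofReal, conj_I, mul_left_comm, ← exp_add]
  ring_nf

theorem moebius_exp (ht : |t| < 1) (θ : ℝ) :
    moebius t (exp (θ * I)) =
      exp ((θ - 2 * Real.arctan (t * Real.sin θ / (1 + t * Real.cos θ)) : ℝ) * I) := by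
  set u := 1 + exp (θ * I) * (t : ℂ) with hu
  have hu0 : u ≠ 0 := one_add_mul_ofReal_ne_zero ht (norm_exp_ofReal_mul_I θ).le
  have hre : u.re = 1 + t * Real.cos θ := by
    rw [hu, add_re, one_re, re_mul_ofReal, exp_ofReal_mul_I_re, mul_comm]
  have him : u.im = t * Real.sin θ := by
    rw [hu, add_im, one_im, im_mul_ofReal, exp_ofReal_mul_I_im, mul_comm, zero_add]
  have harg : Real.arctan (t * Real.sin θ / (1 + t * Real.cos θ)) = u.arg := by
    have h : |u.arg| < Real.pi / 2 :=
      abs_arg_lt_pi_div_two_iff.2 (Or.inl (hre ▸ one_add_mul_cos_pos ht θ))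
    rw [← hre, ← him, ← tan_arg, Real.arctan_tan (abs_lt.1 h).1 (abs_lt.1 h).2]
  have hnum : exp (θ * I) + t = exp (θ * I) * conj u := by
    rw [hu, map_add, map_one, map_mul, conj_ofReal, ← exp_conj, map_mul, conj_ofReal, conj_I,
      mul_add, mul_one, ← mul_assoc, ← exp_add, mul_neg, add_neg_cancel, exp_zero, one_mul]
  rw [moebius, ← hu, div_eq_iff hu0, hnum, conj_eq_exp_arg_mul, ← mul_assoc, ← exp_add, harg]
  push_cast
  ring_nf

theorem exp_Blift (ht : |t| < 1) (φ : ℝ) (k : ℕ) (θ : ℝ) :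
    exp (Blift φ t k θ * I) = Blaschke (exp (φ * I)) t k (exp (θ * I)) := by
  rw [Blaschke_eq_mul_moebius_pow, moebius_exp ht, ← exp_nat_mul, ← exp_add, Blift]
  push_cast
  ring_nf

end Lift

section EdgeAngle

open Complex

variable {t : ℝ} {a b z : ℂ} {k : ℕ}

/-- The angle `φ` for which `e^{iα}` is a fixed point of `B_{e^{iφ},t,k}`, not reduced modulo `2π`.
It parametrizes the `z` for which `B_{z,t,k}` has a fixed point on the unit circle with multiplier
at most `1`; the edge angle is its largest value on that arc. -/
noncomputable def fixedParam (t : ℝ) (k : ℕ) (α : ℝ) : ℝ :=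
  α - Blift 0 t k α

theorem fixedParam_neg (t : ℝ) (k : ℕ) (α : ℝ) : fixedParam t k (-α) = -fixedParam t k α := by
  rw [fixedParam, fixedParam, Blift_zero_neg, neg_sub_neg, neg_sub]

theorem fixedParam_zero (t : ℝ) (k : ℕ) : fixedParam t k 0 = 0 := by
  simp [fixedParam, Blift]

theorem fixedParam_le_self (ht : |t| < 1) (k : ℕ) {α : ℝ} (hα : 0 ≤ α) : fixedParam t k α ≤ α := by
  have h : fixedParam t k 0 = 0 - Blift 0 t k 0 := rfl
  rw [fixedParam_zero] at h
  rw [fixedParam]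
  linarith [monotone_Blift ht 0 k hα]

theorem monotoneOn_fixedParam (ht : |t| < 1) {c : ℝ}
    (hc : ∀ θ ∈ Set.Icc 0 c, k * (1 - t ^ 2) ≤ ‖1 + exp (θ * I) * (t : ℂ)‖ ^ 2) :
    MonotoneOn (fixedParam t k) (Set.Icc 0 c) := by
  have hderiv (θ : ℝ) := (hasDerivAt_id θ).sub (hasDerivAt_Blift ht 0 k θ)
  refine monotoneOn_of_hasDerivWithinAt_nonneg (convex_Icc 0 c)
    (fun θ _ => (hderiv θ).continuousAt.continuousWithinAt)
    (fun θ _ => (hderiv θ).hasDerivWithinAt) fun θ hθ => sub_nonneg.2 ?_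
  exact div_le_one_of_le₀ (hc θ (interior_subset hθ)) (by positivity)

theorem Blaschke_exp_eq_exp_iff (ht : |t| < 1) (z : ℂ) (k : ℕ) (α : ℝ) :
    Blaschke z t k (exp (α * I)) = exp (α * I) ↔ z = exp (fixedParam t k α * I) := by
  have hmul : Blaschke z t k (exp (α * I)) = z * exp (Blift 0 t k α * I) := by
    rw [exp_Blift ht, ofReal_zero, zero_mul, exp_zero, Blaschke_eq_mul_moebius_pow,
      Blaschke_eq_mul_moebius_pow, one_mul]
  rw [hmul, fixedParam, ofReal_sub, sub_mul, exp_sub, eq_div_iff (exp_ne_zero _)]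

theorem exp_arg_mul_I_of_norm_eq_one (ha : ‖a‖ = 1) : exp (a.arg * I) = a := by
  simpa only [ha, ofReal_one, one_mul] using norm_mul_exp_arg_mul_I a

theorem abs_arg_exp_mul_I {x : ℝ} (hx : |x| ≤ Real.pi) : |arg (exp (x * I))| = |x| := by
  rw [arg_exp_mul_I]
  rcases (abs_le.1 hx).1.eq_or_lt with rfl | h
  · rw [toIocMod_eq_iff _ |>.2 ⟨⟨by linarith [Real.pi_pos], by linarith⟩, -1, by simp; ring⟩]
    simp
  · rw [(toIocMod_eq_self _).2 ⟨h, by linarith [(abs_le.1 hx).2]⟩]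

theorem abs_arg_le_abs_arg_iff (ha : ‖a‖ = 1) (hb : ‖b‖ = 1) :
    |a.arg| ≤ |b.arg| ↔ b.re ≤ a.re := by
  have hcos {c : ℂ} (hc : ‖c‖ = 1) : Real.cos |c.arg| = c.re := by
    rw [Real.cos_abs, cos_arg (norm_pos_iff.1 (hc ▸ one_pos)), hc, div_one]
  rw [← hcos ha, ← hcos hb, Real.strictAntiOn_cos.le_iff_ge ⟨abs_nonneg _, abs_arg_le_pi b⟩
    ⟨abs_nonneg _, abs_arg_le_pi a⟩]

theorem pos_of_critical_le (hk : 2 ≤ k) (htc : ((k : ℝ) - 1) / (k + 1) ≤ t) : 0 < t := by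
  have hk' : (1 : ℝ) < k := by exact_mod_cast hk
  exact (div_pos (by linarith) (by linarith)).trans_le htc

theorem abs_lt_one_of_critical_le (hk : 2 ≤ k) (htc : ((k : ℝ) - 1) / (k + 1) ≤ t) (ht1 : t < 1) :
    |t| < 1 := by
  rwa [abs_of_pos (pos_of_critical_le hk htc)]

theorem wbullet_eq_mk (k : ℕ) (t : ℝ) :
    wbullet k t = ⟨(k - 1 - (k + 1) * t ^ 2) / (2 * t),
      √((1 - t ^ 2) * ((k + 1) ^ 2 * t ^ 2 - (k - 1) ^ 2)) / (2 * t)⟩ := by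
  rw [mk_eq_add_mul_I, wbullet, show -(((k : ℝ) + 1) ^ 2 * t ^ 4 - 2 * ((k : ℝ) ^ 2 + 1) * t ^ 2 +
    ((k : ℝ) - 1) ^ 2) = (1 - t ^ 2) * ((k + 1) ^ 2 * t ^ 2 - (k - 1) ^ 2) by ring]
  push_cast
  ring

theorem norm_wbullet (hk : 2 ≤ k) (htc : ((k : ℝ) - 1) / (k + 1) ≤ t) (ht1 : t < 1) :
    ‖wbullet k t‖ = 1 := by
  have ht0 := pos_of_critical_le hk htc
  have hk' : (1 : ℝ) ≤ k := by exact_mod_cast one_le_two.trans hk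
  have hdisc : 0 ≤ (1 - t ^ 2) * ((k + 1) ^ 2 * t ^ 2 - (k - 1) ^ 2) := by
    rw [div_le_iff₀' (by positivity)] at htc
    have h1 := pow_le_pow_left₀ (sub_nonneg.2 hk') htc 2
    rw [mul_pow] at h1
    exact mul_nonneg (sub_nonneg.2 (pow_le_one₀ ht0.le ht1.le)) (sub_nonneg.2 h1)
  refine (pow_eq_one_iff_of_nonneg (norm_nonneg _) two_ne_zero).1 ?_
  rw [Complex.sq_norm, normSq_apply, ← sq, ← sq, wbullet_eq_mk, div_pow, div_pow,
    Real.sq_sqrt hdisc]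
  field_simp
  ring

theorem norm_one_add_wbullet_mul_sq (hk : 2 ≤ k) (htc : ((k : ℝ) - 1) / (k + 1) ≤ t)
    (ht1 : t < 1) : ‖1 + wbullet k t * (t : ℂ)‖ ^ 2 = k * (1 - t ^ 2) := by
  have ht0 := pos_of_critical_le hk htc
  rw [norm_one_add_mul_sq_of_norm_eq_one t (norm_wbullet hk htc ht1), wbullet_eq_mk]
  field_simp
  ring

theorem arg_wbullet_nonneg (hk : 2 ≤ k) (htc : ((k : ℝ) - 1) / (k + 1) ≤ t) :
    0 ≤ (wbullet k t).arg := by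
  have ht0 := pos_of_critical_le hk htc
  rw [arg_nonneg_iff, wbullet_eq_mk]
  positivity

theorem abs_arg_le_arg_wbullet_iff (hk : 2 ≤ k) (htc : ((k : ℝ) - 1) / (k + 1) ≤ t) (ht1 : t < 1)
    (ha : ‖a‖ = 1) :
    |a.arg| ≤ (wbullet k t).arg ↔ k * (1 - t ^ 2) ≤ ‖1 + a * (t : ℂ)‖ ^ 2 := by
  have ht0 := pos_of_critical_le hk htc
  have hw := norm_wbullet hk htc ht1
  rw [← abs_of_nonneg (arg_wbullet_nonneg hk htc), abs_arg_le_abs_arg_iff ha hw,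
    ← norm_one_add_wbullet_mul_sq hk htc ht1, norm_one_add_mul_sq_of_norm_eq_one t ha,
    norm_one_add_mul_sq_of_norm_eq_one t hw, add_le_add_iff_right, add_le_add_iff_left,
    mul_le_mul_iff_right₀ (by positivity)]

theorem monotoneOn_fixedParam_arg_wbullet (hk : 2 ≤ k) (htc : ((k : ℝ) - 1) / (k + 1) ≤ t)
    (ht1 : t < 1) : MonotoneOn (fixedParam t k) (Set.Icc 0 (wbullet k t).arg) := by
  have ht := abs_lt_one_of_critical_le hk htc ht1
  refine monotoneOn_fixedParam ht fun θ hθ => ?_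
  have hθ_abs : |θ| = θ := abs_of_nonneg hθ.1
  rw [← abs_arg_le_arg_wbullet_iff hk htc ht1 (norm_exp_ofReal_mul_I θ),
    abs_arg_exp_mul_I (hθ_abs.trans_le (hθ.2.trans (arg_le_pi _))), hθ_abs]
  exact hθ.2

theorem fixedParam_mem_Icc (hk : 2 ≤ k) (htc : ((k : ℝ) - 1) / (k + 1) ≤ t) (ht1 : t < 1) {α : ℝ}
    (hα : α ∈ Set.Icc 0 (wbullet k t).arg) : fixedParam t k α ∈ Set.Icc 0 Real.pi := by
  have ht := abs_lt_one_of_critical_le hk htc ht1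
  constructor
  · rw [← fixedParam_zero t k]
    exact monotoneOn_fixedParam_arg_wbullet hk htc ht1 (Set.left_mem_Icc.2 (hα.1.trans hα.2)) hα
      hα.1
  · exact (fixedParam_le_self ht k hα.1).trans (hα.2.trans (arg_le_pi _))

theorem phie_eq_fixedParam (hk : 2 ≤ k) (htc : ((k : ℝ) - 1) / (k + 1) ≤ t) (ht1 : t < 1) :
    phie k t = fixedParam t k (wbullet k t).arg := by
  have ht := abs_lt_one_of_critical_le hk htc ht1
  have hexp := exp_arg_mul_I_of_norm_eq_one (norm_wbullet hk htc ht1)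
  have hM : moebius t (wbullet k t) ≠ 0 :=
    norm_pos_iff.1 (norm_moebius_of_norm_eq_one ht (norm_wbullet hk htc ht1) ▸ one_pos)
  have hfix : Blaschke (wbullet k t * (moebius t (wbullet k t) ^ k)⁻¹) t k (wbullet k t) =
      wbullet k t :=
    inv_mul_cancel_right₀ (pow_ne_zero k hM) _
  rw [← hexp, Blaschke_exp_eq_exp_iff ht, hexp] at hfix
  have hpi := fixedParam_mem_Icc hk htc ht1 (Set.right_mem_Icc.2 (arg_wbullet_nonneg hk htc))
  rw [phie, ← inv_div, inv_pow]
  exact (congrArg arg hfix).trans <| (arg_exp_mul_I _).trans <|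
    (toIocMod_eq_self _).2 ⟨by linarith [hpi.1, Real.pi_pos], by linarith [hpi.2]⟩

theorem abs_arg_le_phie (hk : 2 ≤ k) (htc : ((k : ℝ) - 1) / (k + 1) ≤ t) (ht1 : t < 1)
    (ha : ‖a‖ = 1) (hfix : Blaschke z t k a = a)
    (hderiv : k * (1 - t ^ 2) ≤ ‖1 + a * (t : ℂ)‖ ^ 2) : |z.arg| ≤ phie k t := by
  have ht := abs_lt_one_of_critical_le hk htc ht1
  have hexp := exp_arg_mul_I_of_norm_eq_one ha
  have hmem : |a.arg| ∈ Set.Icc 0 (wbullet k t).arg :=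
    ⟨abs_nonneg _, (abs_arg_le_arg_wbullet_iff hk htc ht1 ha).2 hderiv⟩
  have hpi := fixedParam_mem_Icc hk htc ht1 hmem
  have habs : |fixedParam t k a.arg| = fixedParam t k |a.arg| := by
    rw [← abs_of_nonneg hpi.1]
    rcases abs_choice a.arg with h | h <;> simp only [h, fixedParam_neg, abs_neg]
  rw [← hexp, Blaschke_exp_eq_exp_iff ht] at hfix
  calc |z.arg| = fixedParam t k |a.arg| := by
        rw [hfix, abs_arg_exp_mul_I (habs.trans_le hpi.2), habs]
    _ ≤ fixedParam t k (wbullet k t).arg :=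
        monotoneOn_fixedParam_arg_wbullet hk htc ht1 hmem
          (Set.right_mem_Icc.2 (arg_wbullet_nonneg hk htc)) hmem.2
    _ = phie k t := (phie_eq_fixedParam hk htc ht1).symm

theorem abs_lt_one_of_belowCurve (hk : 2 ≤ k) (hbc : belowCurve k t z) : |t| < 1 := by
  rcases hbc with ⟨ht0, htc⟩ | ⟨htc, ht1, -⟩
  · rw [abs_of_nonneg ht0]
    exact htc.trans ((div_lt_one (by positivity)).2 (by linarith))
  · exact abs_lt_one_of_critical_le hk htc ht1

theorem exists_interior_fixedPoint_of_belowCurve (hk : 2 ≤ k) (hz : ‖z‖ = 1)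
    (hbc : belowCurve k t z) : ∃ a, ‖a‖ < 1 ∧ Blaschke z t k a = a := by
  have ht := abs_lt_one_of_belowCurve hk hbc
  obtain ⟨a, hfix, ha | ⟨ha, hderiv⟩⟩ := exists_fixedPoint_Blaschke ht hz.le k
  · exact ⟨a, ha, hfix⟩
  exfalso
  rcases hbc with ⟨ht0, htc⟩ | ⟨htc, ht1, harg, -⟩
  · rw [lt_div_iff₀' (by positivity)] at htc
    have hnorm : ‖1 + a * (t : ℂ)‖ ≤ 1 + t := by
      simpa [ha, abs_of_nonneg ht0] using norm_add_le 1 (a * (t : ℂ))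
    nlinarith [pow_le_pow_left₀ (norm_nonneg _) hnorm 2]
  · exact (abs_arg_le_phie hk htc ht1 ha hfix hderiv).not_gt harg

end EdgeAngle

section Growth

open Complex Filter

theorem tendsto_iterate_sub_iterate_Blift {k : ℕ} (hk : 2 ≤ k) {t φ x y : ℝ} {a : ℂ} {G : ℝ → ℝ}
    (ht : |t| < 1) (hG : Blift φ t k ≤ G) (hxy : x < y) (ha : ‖a‖ < 1)
    (hfix : Blaschke (exp (φ * I)) t k a = a) :
    Tendsto (fun n => G^[n] y - (Blift φ t k)^[n] x) atTop atTop := by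
  have hcircle (θ : ℝ) : ‖exp (θ * I)‖ = 1 := norm_exp_ofReal_mul_I θ
  refine tendsto_iterate_sub_iterate_atTop (hasDerivAt_Blift ht φ k) (continuous_deriv_Blift ht k)
    hG (continuous_poissonKernel_exp ha) (fun θ => poissonKernel_zero_pos ha (hcircle θ))
    (fun θ => (poissonKernel_zero_mem_Icc ha (hcircle θ)).2)
    (one_lt_powExpansion hk (norm_nonneg _) (norm_moebius_lt_one ht ha)) (fun θ => ?_) hxy
  rw [exp_Blift ht]
  exact powExpansion_mul_poissonKernel_le_Blaschke ht (by omega) (hcircle φ) ha hfix (hcircle θ)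

end Growth

open Filter in
theorem stmt9_general {k : ℕ} (hk : 2 ≤ k) {t φ₁ φ₂ x₁ x₂ : ℝ} (hφ : φ₁ ≤ φ₂) (hx : x₁ < x₂)
    (hbc : belowCurve k t (Complex.exp (φ₁ * Complex.I))) :
    (∃ N : ℕ, ∀ n : ℕ, N ≤ n →
      2 * Real.pi * (k : ℝ) ^ (n - N) ≤ (Blift φ₂ t k)^[n] x₂ - (Blift φ₁ t k)^[n] x₁) ∧
    0 < liminf
        (fun n : ℕ => ((k : ℝ) ^ n)⁻¹ * ((Blift φ₂ t k)^[n] x₂ - (Blift φ₁ t k)^[n] x₁)) atTop := by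
  have ht : |t| < 1 := abs_lt_one_of_belowCurve hk hbc
  have hle : Blift φ₁ t k ≤ Blift φ₂ t k := Blift_le_Blift_of_le hφ t k
  have hk' : (2 : ℝ) ≤ k := by exact_mod_cast hk
  obtain ⟨a, ha, hfix⟩ := exists_interior_fixedPoint_of_belowCurve hk
    (Complex.norm_exp_ofReal_mul_I φ₁) hbc
  obtain ⟨N, hN⟩ := ((tendsto_iterate_sub_iterate_Blift hk ht hle hx ha hfix).eventually_ge_atTop
    (2 * Real.pi)).exists
  have hgrowth (n : ℕ) (hn : N ≤ n) : 2 * Real.pi * (k : ℝ) ^ (n - N) ≤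
      (Blift φ₂ t k)^[n] x₂ - (Blift φ₁ t k)^[n] x₁ := by
    have h := mul_pow_le_iterate_sub_iterate (monotone_Blift ht φ₁ k) hle
      (Blift_add_two_pi φ₁ t k) hN (n - N)
    rwa [← Function.iterate_add_apply, ← Function.iterate_add_apply, Nat.sub_add_cancel hn] at h
  exact ⟨⟨N, hgrowth⟩, liminf_inv_pow_mul_pos (by linarith) Real.two_pi_pos hgrowth
    (iterate_sub_iterate_le hk' (abs_Blift_le φ₁ t k) (abs_Blift_le φ₂ t k) x₁ x₂)⟩

theorem stmt9 (k : ℕ) (hk : 2 ≤ k) (t : ℝ) (ht0 : 0 ≤ t) (ht1 : t < 1)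
    (φ1 φ2 : ℝ) (hφ1 : 0 < φ1) (hφ12 : φ1 < φ2) (hφ2 : φ2 ≤ Real.pi)
    (hbc : belowCurve k t (Complex.exp ((φ1 : ℂ) * Complex.I))) :
    (∃ N : ℕ, ∀ n : ℕ, N ≤ n →
      2 * Real.pi * (k : ℝ) ^ (n - N) ≤ (Blift φ2 t k)^[n] φ2 - (Blift φ1 t k)^[n] φ1) ∧
    0 < Filter.liminf
        (fun n : ℕ => ((k : ℝ) ^ n)⁻¹ * ((Blift φ2 t k)^[n] φ2 - (Blift φ1 t k)^[n] φ1))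
        Filter.atTop :=
  stmt9_general hk hφ12.le hφ12 hbc
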